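/- Let n ≥ 1, let ω = exp(2πi/2^n), let U be the 2^n × 2^n matrix with entries U_{y,z} = ω^{yz}/√(2^n), and let Z₁ be the diagonal matrix with (Z₁)_{y,y} = (−1)^{⌊y/2^{n−1}⌋}. Then for all x, z ∈ {0, …, 2^n − 1} with x ≢ z (mod 2), the (z,x) entry of U† Z₁ U is nonzero. -/

import Mathlib

open Complex Matrix

/-- The quantum Fourier transform matrix on `n` qubits: entries `ω^(y z)/√(2^n)`
with `ω = exp(2πi/2^n)`. -/
noncomputable def QFT (n : ℕ) : Matrix (Fin (2 ^ n)) (Fin (2 ^ n)) ℂ :=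
  fun y z => Complex.exp (2 * Real.pi * Complex.I / 2 ^ n) ^ (y.val * z.val) /
    Real.sqrt (2 ^ n)

/-- The Pauli-Z operator on the first (most significant) qubit: the diagonal matrix
with entries `(−1)^(y₁)`, where `y₁ = ⌊y/2^(n−1)⌋` is the most significant bit. -/
noncomputable def PauliZ1 (n : ℕ) : Matrix (Fin (2 ^ n)) (Fin (2 ^ n)) ℂ :=
  Matrix.diagonal (fun y => (-1 : ℂ) ^ (y.val / 2 ^ (n - 1)))

/-! With `N = 2^(n-1)` and `r = ω̄^z ω^x`, the `(z,x)` entry of `U† Z₁ U` is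
`2^(-n) ∑_{y < 2N} (-1)^⌊y/N⌋ r^y`. Since `ω^N = -1` and `x`, `z` have different parities,
`r^N = -1`. Hence the upper half of the sum, where the sign is `-1`, repeats the lower half
(`signed_sum_eq`), and the sum is twice the geometric sum `g = ∑_{j < N} r^j`. It is nonzero
because `g (r - 1) = r^N - 1 = -2`. -/

theorem exp_pow_half (m : ℕ) :
    Complex.exp (2 * Real.pi * Complex.I / 2 ^ (m + 1)) ^ (2 ^ m) = -1 := by
  rw [← Complex.exp_nat_mul, ← Complex.exp_pi_mul_I]
  congr 1
  push_cast
  rw [pow_succ]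
  field_simp

theorem neg_one_pow_mul_of_diff_parity (a b : ℕ) (h : a % 2 ≠ b % 2) :
    (-1 : ℂ) ^ b * (-1) ^ a = -1 := by
  rw [← pow_add]
  exact Odd.neg_one_pow (Nat.odd_iff.mpr (by omega))

theorem signed_sum_eq (N : ℕ) (hN : 0 < N) (r : ℂ) (hr : r ^ N = -1) :
    ∑ y ∈ Finset.range (N + N), (-1 : ℂ) ^ (y / N) * r ^ y =
      2 * ∑ y ∈ Finset.range N, r ^ y := by
  rw [Finset.sum_range_add, two_mul]
  congr 1
  · refine Finset.sum_congr rfl fun y hy => ?_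
    rw [Nat.div_eq_of_lt (Finset.mem_range.mp hy)]
    simp
  · refine Finset.sum_congr rfl fun y hy => ?_
    rw [Nat.add_div_left _ hN, Nat.div_eq_of_lt (Finset.mem_range.mp hy), pow_add r, hr]
    simp

theorem geom_sum_ne_zero_of_pow_eq_neg_one (N : ℕ) (r : ℂ) (hr : r ^ N = -1) :
    ∑ y ∈ Finset.range N, r ^ y ≠ 0 := by
  intro h
  have := geom_sum_mul r N
  rw [h, hr] at this
  norm_num at this

theorem qft_spread_entry_ne_zero_of_diff_parity (n : ℕ) (hn : 1 ≤ n)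
    (x z : Fin (2 ^ n)) (hxz : x.val % 2 ≠ z.val % 2) :
    ((QFT n)ᴴ * PauliZ1 n * QFT n) z x ≠ 0 := by
  obtain ⟨m, rfl⟩ : ∃ m, n = m + 1 := ⟨n - 1, by omega⟩
  have hω := exp_pow_half m
  set ω := Complex.exp (2 * Real.pi * Complex.I / 2 ^ (m + 1)) with hω_def
  set r : ℂ := (starRingEnd ℂ ω) ^ z.val * ω ^ x.val with hr_def
  have hr : r ^ 2 ^ m = -1 := by
    rw [hr_def, mul_pow, pow_right_comm, pow_right_comm ω, ← map_pow, hω, map_neg, map_one]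
    exact neg_one_pow_mul_of_diff_parity _ _ hxz
  have key : ((QFT (m + 1))ᴴ * PauliZ1 (m + 1) * QFT (m + 1)) z x =
      (∑ y ∈ Finset.range (2 ^ m + 2 ^ m), (-1 : ℂ) ^ (y / 2 ^ m) * r ^ y) /
        ((Real.sqrt (2 ^ (m + 1)) : ℂ) * Real.sqrt (2 ^ (m + 1))) := by
    rw [← two_mul, ← pow_succ', ← Fin.sum_univ_eq_sum_range
      (fun y => (-1 : ℂ) ^ (y / 2 ^ m) * r ^ y), Finset.sum_div, Matrix.mul_apply]
    refine Finset.sum_congr rfl fun y _ => ?_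
    rw [PauliZ1, Matrix.mul_diagonal, Matrix.conjTranspose_apply, QFT, QFT, ← hω_def,
      Complex.star_def, map_div₀, map_pow, Complex.conj_ofReal, hr_def, mul_pow,
      ← pow_mul, ← pow_mul, Nat.add_sub_cancel, mul_comm z.val, mul_comm x.val]
    ring
  have hs : (Real.sqrt (2 ^ (m + 1)) : ℂ) ≠ 0 := by
    exact_mod_cast (Real.sqrt_pos.mpr (by positivity)).ne'
  rw [key, signed_sum_eq _ (by positivity) r hr]
  exact div_ne_zero (mul_ne_zero two_ne_zero (geom_sum_ne_zero_of_pow_eq_neg_one _ r hr))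
    (mul_ne_zero hs hs)
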